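/- arXiv:2209.15347 — 3 statements merged into one kernel-verified Lean document; each statement's English description precedes it below -/
import Mathlib

section
/- Let (G, μ) be a measure space, let s > 0 be a real number, and let w : G → ℝ be measurable with w > 0 a.e. and W := ∫ w^{1/(1+s)} dμ ∈ (0, ∞). Define ρ*(g) := w(g)^{1/(1+s)} / W. Then ∫ ρ* dμ = 1, ∫ w (ρ*)^{-s} dμ = W^{1+s}, and consequently for every measurable ρ : G → ℝ with ρ > 0 a.e., ∫ ρ dμ = 1 and w ρ^{-s} integrable, one has ∫ w (ρ*)^{-s} dμ ≤ ∫ w ρ^{-s} dμ. -/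
open MeasureTheory

/-!
Factor `w ^ (1 / (1 + s)) = (w ρ ^ (-s)) ^ (1 / (1 + s)) * ρ ^ (s / (1 + s))`. Hölder's inequality
with the weights `1 / (1 + s)` and `s / (1 + s)` gives
`(∫ w ^ (1 / (1 + s))) ^ (1 + s) ≤ (∫ w ρ ^ (-s)) * (∫ ρ) ^ s`, so the left-hand side is a lower
bound for the loss of any probability density `ρ`. The two factors of Hölder's inequality are
proportional for `ρ ∝ w ^ (1 / (1 + s))`, and then the bound is attained.
-/

section

variable {G : Type*} [MeasurableSpace G] {μ : Measure G} {s : ℝ} {w ρ : G → ℝ}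

theorem integral_rpow_mul_rpow_le {f g : G → ℝ} {p q : ℝ} (hp : 0 ≤ p) (hq : 0 ≤ q)
    (hpq : p + q = 1) (hf₀ : 0 ≤ᵐ[μ] f) (hg₀ : 0 ≤ᵐ[μ] g)
    (hf : Integrable f μ) (hg : Integrable g μ) :
    ∫ x, f x ^ p * g x ^ q ∂μ ≤ (∫ x, f x ∂μ) ^ p * (∫ x, g x ∂μ) ^ q := by
  have hf_fin : ∫⁻ x, ENNReal.ofReal (f x) ∂μ ≠ ⊤ := hf.lintegral_lt_top.ne
  have hg_fin : ∫⁻ x, ENNReal.ofReal (g x) ∂μ ≠ ⊤ := hg.lintegral_lt_top.ne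
  have h_meas : AEStronglyMeasurable (fun x ↦ f x ^ p * g x ^ q) μ :=
    ((hf.aemeasurable.pow_const p).mul (hg.aemeasurable.pow_const q)).aestronglyMeasurable
  have h_nonneg : 0 ≤ᵐ[μ] fun x ↦ f x ^ p * g x ^ q := by
    filter_upwards [hf₀, hg₀] with x hfx hgx
    exact mul_nonneg (Real.rpow_nonneg hfx p) (Real.rpow_nonneg hgx q)
  have h_ofReal : ∫⁻ x, ENNReal.ofReal (f x ^ p * g x ^ q) ∂μ =
      ∫⁻ x, ENNReal.ofReal (f x) ^ p * ENNReal.ofReal (g x) ^ q ∂μ := by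
    refine lintegral_congr_ae ?_
    filter_upwards [hf₀, hg₀] with x hfx hgx
    rw [ENNReal.ofReal_mul (Real.rpow_nonneg hfx p), ENNReal.ofReal_rpow_of_nonneg hfx hp,
      ENNReal.ofReal_rpow_of_nonneg hgx hq]
  rw [integral_eq_lintegral_of_nonneg_ae h_nonneg h_meas, h_ofReal,
    integral_eq_lintegral_of_nonneg_ae hf₀ hf.aestronglyMeasurable,
    integral_eq_lintegral_of_nonneg_ae hg₀ hg.aestronglyMeasurable,
    ENNReal.toReal_rpow, ENNReal.toReal_rpow, ← ENNReal.toReal_mul]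
  refine ENNReal.toReal_mono ?_ (ENNReal.lintegral_mul_norm_pow_le
    hf.aemeasurable.ennreal_ofReal hg.aemeasurable.ennreal_ofReal hp hq hpq)
  exact ENNReal.mul_ne_top (ENNReal.rpow_ne_top_of_nonneg hp hf_fin)
    (ENNReal.rpow_ne_top_of_nonneg hq hg_fin)

theorem mul_rpow_neg_rpow_mul_rpow {a r : ℝ} (hs : -1 < s) (ha : 0 ≤ a) (hr : 0 ≤ r)
    (har : r = 0 → a = 0) :
    (a * r ^ (-s)) ^ (1 / (1 + s)) * r ^ (s / (1 + s)) = a ^ (1 / (1 + s)) := by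
  rcases hr.eq_or_lt' with rfl | hr_pos
  · have h_exp : 1 / (1 + s) ≠ 0 := one_div_ne_zero (by linarith)
    rw [har rfl, zero_mul, Real.zero_rpow h_exp, zero_mul]
  · have h_exp : -s * (1 / (1 + s)) + s / (1 + s) = 0 := by ring
    rw [Real.mul_rpow ha (Real.rpow_nonneg hr _), ← Real.rpow_mul hr, mul_assoc,
      ← Real.rpow_add hr_pos, h_exp, Real.rpow_zero, mul_one]

theorem mul_rpow_div_rpow_neg {a c : ℝ} (hs : -1 < s) (ha : 0 ≤ a) (hc : 0 ≤ c) :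
    a * (a ^ (1 / (1 + s)) / c) ^ (-s) = a ^ (1 / (1 + s)) * c ^ s := by
  have hs₁ : 1 + s ≠ 0 := by linarith
  rcases ha.eq_or_lt' with rfl | ha_pos
  · rw [zero_mul, Real.zero_rpow (one_div_ne_zero hs₁), zero_mul]
  · have h_exp : 1 + 1 / (1 + s) * -s = 1 / (1 + s) := by field_simp; ring
    calc a * (a ^ (1 / (1 + s)) / c) ^ (-s)
        = a ^ (1 : ℝ) * a ^ (1 / (1 + s) * -s) * c ^ s := by
          rw [Real.div_rpow (Real.rpow_nonneg ha _) hc, ← Real.rpow_mul ha, Real.rpow_neg hc,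
            div_inv_eq_mul, Real.rpow_one, mul_assoc]
      _ = a ^ (1 / (1 + s)) * c ^ s := by rw [← Real.rpow_add ha_pos, h_exp]

/-- The high-resolution optimality-loss functional `ρ ↦ ∫ w ρ ^ (-s) dμ` of a quantization-point
density `ρ`, for the value density `w`. As a Bochner integral, it is `0` when the integrand is not
integrable. For `s ≠ 0` the integrand is `0` wherever `ρ` vanishes, since `0 ^ (-s) = 0`; this is
the intended value only where `w` vanishes as well. -/
noncomputable def highResolutionLoss (μ : Measure G) (s : ℝ) (w ρ : G → ℝ) : ℝ :=
  ∫ g, w g * ρ g ^ (-s) ∂μ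

/-- The density `ρ*` of quantization points proportional to `w ^ (1 / (1 + s))`, normalized to have
total mass one. It is identically `0` when the normalizing integral is `0`. -/
noncomputable def optimalPointDensity (μ : Measure G) (s : ℝ) (w : G → ℝ) (g : G) : ℝ :=
  w g ^ (1 / (1 + s)) / ∫ g', w g' ^ (1 / (1 + s)) ∂μ

theorem rpow_integral_le_highResolutionLoss_mul_rpow (hs : 0 ≤ s) (hw₀ : 0 ≤ᵐ[μ] w)
    (hρ₀ : 0 ≤ᵐ[μ] ρ) (hwρ : ∀ᵐ g ∂μ, ρ g = 0 → w g = 0) (hρ : Integrable ρ μ)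
    (h_loss : Integrable (fun g ↦ w g * ρ g ^ (-s)) μ) :
    (∫ g, w g ^ (1 / (1 + s)) ∂μ) ^ (1 + s) ≤
      highResolutionLoss μ s w ρ * (∫ g, ρ g ∂μ) ^ s := by
  have hs₁ : 0 < 1 + s := by linarith
  have h_loss₀ : 0 ≤ᵐ[μ] fun g ↦ w g * ρ g ^ (-s) := by
    filter_upwards [hw₀, hρ₀] with g hwg hρg
    exact mul_nonneg hwg (Real.rpow_nonneg hρg _)
  have h_factor : ∫ g, w g ^ (1 / (1 + s)) ∂μ =
      ∫ g, (w g * ρ g ^ (-s)) ^ (1 / (1 + s)) * ρ g ^ (s / (1 + s)) ∂μ := by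
    refine integral_congr_ae ?_
    filter_upwards [hw₀, hρ₀, hwρ] with g hwg hρg hwρg
    exact (mul_rpow_neg_rpow_mul_rpow (by linarith) hwg hρg hwρg).symm
  have h_holder : ∫ g, w g ^ (1 / (1 + s)) ∂μ ≤
      highResolutionLoss μ s w ρ ^ (1 / (1 + s)) * (∫ g, ρ g ∂μ) ^ (s / (1 + s)) :=
    h_factor.trans_le <| integral_rpow_mul_rpow_le (by positivity) (by positivity) (by field_simp)
      h_loss₀ hρ₀ h_loss hρ
  have h_mass : 0 ≤ ∫ g, ρ g ∂μ := integral_nonneg_of_ae hρ₀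
  have h_value : 0 ≤ highResolutionLoss μ s w ρ := integral_nonneg_of_ae h_loss₀
  have h_int : 0 ≤ ∫ g, w g ^ (1 / (1 + s)) ∂μ :=
    integral_nonneg_of_ae (hw₀.mono fun _ hwg ↦ Real.rpow_nonneg hwg _)
  calc (∫ g, w g ^ (1 / (1 + s)) ∂μ) ^ (1 + s)
      ≤ (highResolutionLoss μ s w ρ ^ (1 / (1 + s)) * (∫ g, ρ g ∂μ) ^ (s / (1 + s))) ^ (1 + s) :=
        Real.rpow_le_rpow h_int h_holder hs₁.le
    _ = highResolutionLoss μ s w ρ * (∫ g, ρ g ∂μ) ^ s := by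
        rw [Real.mul_rpow (by positivity) (by positivity), ← Real.rpow_mul h_value,
          ← Real.rpow_mul h_mass, div_mul_cancel₀ _ hs₁.ne', div_mul_cancel₀ _ hs₁.ne',
          Real.rpow_one]

theorem integral_optimalPointDensity (hW : ∫ g, w g ^ (1 / (1 + s)) ∂μ ≠ 0) :
    ∫ g, optimalPointDensity μ s w g ∂μ = 1 := by
  simp only [optimalPointDensity, integral_div, div_self hW]

theorem highResolutionLoss_optimalPointDensity (hs : -1 < s) (hw₀ : 0 ≤ᵐ[μ] w) :
    highResolutionLoss μ s w (optimalPointDensity μ s w) =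
      (∫ g, w g ^ (1 / (1 + s)) ∂μ) ^ (1 + s) := by
  have hW : 0 ≤ ∫ g, w g ^ (1 / (1 + s)) ∂μ :=
    integral_nonneg_of_ae (hw₀.mono fun _ hwg ↦ Real.rpow_nonneg hwg _)
  calc highResolutionLoss μ s w (optimalPointDensity μ s w)
      = ∫ g, w g ^ (1 / (1 + s)) * (∫ g', w g' ^ (1 / (1 + s)) ∂μ) ^ s ∂μ :=
        integral_congr_ae (hw₀.mono fun _ hwg ↦ mul_rpow_div_rpow_neg hs hwg hW)
    _ = (∫ g, w g ^ (1 / (1 + s)) ∂μ) ^ (1 + s) := by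
        rw [integral_mul_const, Real.rpow_add' hW (by linarith), Real.rpow_one]

theorem highResolutionLoss_optimalPointDensity_le (hs : 0 ≤ s) (hw₀ : 0 ≤ᵐ[μ] w)
    (hρ₀ : 0 ≤ᵐ[μ] ρ) (hwρ : ∀ᵐ g ∂μ, ρ g = 0 → w g = 0) (hρ₁ : ∫ g, ρ g ∂μ = 1)
    (h_loss : Integrable (fun g ↦ w g * ρ g ^ (-s)) μ) :
    highResolutionLoss μ s w (optimalPointDensity μ s w) ≤ highResolutionLoss μ s w ρ := by
  have h_bound := rpow_integral_le_highResolutionLoss_mul_rpow hs hw₀ hρ₀ hwρ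
    (integrable_of_integral_eq_one hρ₁) h_loss
  rwa [hρ₁, Real.one_rpow, mul_one,
    ← highResolutionLoss_optimalPointDensity (by linarith) hw₀] at h_bound

theorem goq_optimal_density_general (hs : 0 ≤ s) (hw₀ : 0 ≤ᵐ[μ] w)
    (hW : ∫ g, w g ^ (1 / (1 + s)) ∂μ ≠ 0) :
    ∫ g, optimalPointDensity μ s w g ∂μ = 1 ∧
    highResolutionLoss μ s w (optimalPointDensity μ s w) =
      (∫ g, w g ^ (1 / (1 + s)) ∂μ) ^ (1 + s) ∧
    ∀ ρ : G → ℝ, 0 ≤ᵐ[μ] ρ → (∀ᵐ g ∂μ, ρ g = 0 → w g = 0) → ∫ g, ρ g ∂μ = 1 →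
      Integrable (fun g ↦ w g * ρ g ^ (-s)) μ →
      highResolutionLoss μ s w (optimalPointDensity μ s w) ≤ highResolutionLoss μ s w ρ :=
  ⟨integral_optimalPointDensity hW,
    highResolutionLoss_optimalPointDensity (by linarith) hw₀,
    fun _ ↦ highResolutionLoss_optimalPointDensity_le hs hw₀⟩

end

/-- Optimality of the high-resolution quantization-point density (Proposition III.1):
the density `ρ*` proportional to `w^{1/(1+s)}` integrates to one, achieves the value
`W^{1+s}` for the high-resolution optimality-loss functional `ρ ↦ ∫ w ρ^{-s} dμ`,
and minimizes this functional over all probability densities. -/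
theorem goq_optimal_density
    {G : Type*} [MeasurableSpace G] (μ : Measure G) (s : ℝ) (hs : 0 < s)
    (w : G → ℝ) (hwm : Measurable w) (hw0 : ∀ᵐ g ∂μ, 0 < w g)
    (hWint : Integrable (fun g => (w g) ^ (1 / (1 + s))) μ)
    (W : ℝ) (hW : W = ∫ g, (w g) ^ (1 / (1 + s)) ∂μ) (hWpos : 0 < W)
    (ρstar : G → ℝ) (hρstar : ∀ g, ρstar g = (w g) ^ (1 / (1 + s)) / W) :
    (∫ g, ρstar g ∂μ = 1) ∧
    (∫ g, w g * (ρstar g) ^ (-s) ∂μ = W ^ (1 + s)) ∧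
    (∀ ρ : G → ℝ, Measurable ρ → (∀ᵐ g ∂μ, 0 < ρ g) → (∫ g, ρ g ∂μ = 1) →
      Integrable (fun g => w g * (ρ g) ^ (-s)) μ →
      ∫ g, w g * (ρstar g) ^ (-s) ∂μ ≤ ∫ g, w g * (ρ g) ^ (-s) ∂μ) := by
  obtain rfl : ρstar = optimalPointDensity μ s w :=
    funext fun g ↦ by rw [hρstar, hW, optimalPointDensity]
  subst hW
  obtain ⟨h_mass, h_value, h_min⟩ :=
    goq_optimal_density_general hs.le (hw0.mono fun _ ↦ le_of_lt) hWpos.ne'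
  exact ⟨h_mass, h_value, fun ρ _ hρ₀ ↦
    h_min ρ (hρ₀.mono fun _ ↦ le_of_lt) (hρ₀.mono fun _ hg h ↦ absurd h hg.ne')⟩
end

section
/- Let g > 0 be a real number. Then for every x > 0, exp(−1/(g x))/x ≤ g · exp(−1), with equality if and only if x = 1/g; that is, x = 1/g is the unique global maximizer over (0, ∞) of the goal function x ↦ exp(−1/(g x))/x. -/
/-!
With `t = 1 / (g * x)` the goal function becomes `g * (t * exp (-t))`, and `t * exp (-t)` is at most
`exp (-1)` because the graph of `exp` lies above its tangent line at `0`, touching it only there.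
-/

theorem mul_exp_neg_lt_exp_neg_one {t : ℝ} (ht : t ≠ 1) : t * Real.exp (-t) < Real.exp (-1) :=
  calc
    t * Real.exp (-t) < Real.exp (t - 1) * Real.exp (-t) := by
      gcongr
      simpa only [sub_add_cancel] using Real.add_one_lt_exp (sub_ne_zero.mpr ht)
    _ = Real.exp (-1) := by
      rw [← Real.exp_add]
      ring_nf

theorem mul_exp_neg_eq_exp_neg_one_iff {t : ℝ} : t * Real.exp (-t) = Real.exp (-1) ↔ t = 1 := by
  refine ⟨fun h => ?_, fun h => by rw [h, one_mul]⟩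
  by_contra ht
  exact (mul_exp_neg_lt_exp_neg_one ht).ne h

theorem goq_ee_table_optimal_decision_general {g x : ℝ} (hg : 0 < g) (hx : x ≠ 0) :
    Real.exp (-(1 / (g * x))) / x ≤ g * Real.exp (-1) ∧
      (Real.exp (-(1 / (g * x))) / x = g * Real.exp (-1) ↔ x = 1 / g) := by
  have goal_eq : Real.exp (-(1 / (g * x))) / x =
      g * (1 / (g * x) * Real.exp (-(1 / (g * x)))) := by
    rw [← mul_assoc, mul_one_div, div_mul_cancel_left₀ hg.ne', inv_mul_eq_div]
  have critical_iff : 1 / (g * x) = 1 ↔ x = 1 / g := by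
    rw [div_eq_one_iff_eq (mul_ne_zero hg.ne' hx), eq_div_iff hg.ne', mul_comm, eq_comm]
  rw [goal_eq, mul_le_mul_iff_right₀ hg, mul_right_inj' hg.ne', mul_exp_neg_eq_exp_neg_one_iff,
    critical_iff]
  exact ⟨Real.mul_exp_neg_le_exp_neg_one _, Iff.rfl⟩

/-- Table I: for the energy-efficiency goal function `f(x;g) = exp(-1/(g x))/x`, the
decision `x = 1/g` is the unique global maximizer over `(0,∞)`. -/
theorem goq_ee_table_optimal_decision
    (g : ℝ) (hg : 0 < g) :
    ∀ x : ℝ, 0 < x →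
      (Real.exp (-(1 / (g * x))) / x ≤ g * Real.exp (-1) ∧
        (Real.exp (-(1 / (g * x))) / x = g * Real.exp (-1) ↔ x = 1 / g)) := by
  intro x hx
  exact goq_ee_table_optimal_decision_general hg hx.ne'
end

section
/- Let F : ℝ^d → ℝ be twice continuously differentiable on a neighborhood of x₀ := χ(g₀), where χ : ℝ^p → ℝ^d is differentiable at g₀ ∈ ℝ^p, and suppose the derivative of F vanishes at x₀. Let J := Dχ(g₀) and let H := D²F(x₀) be the second derivative of F at x₀ as a bilinear form. Then F(χ(z)) − F(χ(g₀)) − (1/2) H(J(z − g₀), J(z − g₀)) = o(‖z − g₀‖²) as z → g₀. -/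
open Filter Asymptotics

/-!
Twice differentiability of `f` at `x₀` says that `f' - f' x₀ - f'' (· - x₀)` is
`o(‖x - x₀‖)`. As `f''` is symmetric, this is the derivative of the second order Taylor
remainder, so by the mean value inequality that remainder is `o(‖x - x₀‖²)`, and hence
`o(‖z - g₀‖²)` along `x = χ z`. In the quadratic term `χ z - χ g₀` may be replaced by its
linearization: both are `O(z - g₀)` and they differ by `o(z - g₀)`. The first order term vanishes
at a critical point.
-/

section Bilinear

variable {𝕜 E F G : Type*} [NontriviallyNormedField 𝕜]
  [NormedAddCommGroup E] [NormedSpace 𝕜 E] [NormedAddCommGroup F] [NormedSpace 𝕜 F]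
  [NormedAddCommGroup G] [NormedSpace 𝕜 G]

theorem isLittleO_bilinear_sub_bilinear {α E' F' : Type*} [SeminormedAddCommGroup E']
    [SeminormedAddCommGroup F'] {l : Filter α} (B : E →L[𝕜] F →L[𝕜] G) {u₁ u₂ : α → E}
    {v₁ v₂ : α → F} {a : α → E'} {b : α → F'} (hu : (fun t => u₁ t - u₂ t) =o[l] a)
    (hv : (fun t => v₁ t - v₂ t) =o[l] b) (hu₂ : u₂ =O[l] a) (hv₁ : v₁ =O[l] b) :
    (fun t => B (u₁ t) (v₁ t) - B (u₂ t) (v₂ t)) =o[l] fun t => ‖a t‖ * ‖b t‖ := by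
  have hleft : (fun t => B (u₁ t - u₂ t) (v₁ t)) =o[l] fun t => ‖a t‖ * ‖b t‖ :=
    B.isBoundedBilinearMap.isBigO_comp.trans_isLittleO (hu.norm_norm.mul_isBigO hv₁.norm_norm)
  have hright : (fun t => B (u₂ t) (v₁ t - v₂ t)) =o[l] fun t => ‖a t‖ * ‖b t‖ :=
    B.isBoundedBilinearMap.isBigO_comp.trans_isLittleO (hu₂.norm_norm.mul_isLittleO hv.norm_norm)
  refine (hleft.add hright).congr_left fun t => ?_
  simp only [map_sub, sub_apply, sub_add_sub_cancel]

theorem hasFDerivAt_half_smul_bilinear_self [NeZero (2 : 𝕜)] {B : E →L[𝕜] E →L[𝕜] F}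
    (hB : ∀ v w, B v w = B w v) (x₀ x : E) :
    HasFDerivAt (fun y => (1 / 2 : 𝕜) • B (y - x₀) (y - x₀)) (B (x - x₀)) x := by
  have hsub : HasFDerivAt (fun y => y - x₀) (.id 𝕜 E) x := (hasFDerivAt_id x).sub_const x₀
  refine ((B.hasFDerivAt_of_bilinear hsub hsub).const_smul (1 / 2 : 𝕜)).congr_fderiv ?_
  ext v
  calc (1 / 2 : 𝕜) • (B (x - x₀) v + B v (x - x₀))
      = (1 / 2 : 𝕜) • (2 : 𝕜) • B (x - x₀) v := by rw [hB v, two_smul]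
    _ = B (x - x₀) v := by rw [smul_smul, one_div, inv_mul_cancel₀ two_ne_zero, one_smul]

end Bilinear

section Taylor

variable {𝕜 D E F : Type*} [RCLike 𝕜] [NormedAddCommGroup D] [NormedSpace 𝕜 D]
  [NormedAddCommGroup E] [NormedSpace 𝕜 E] [NormedAddCommGroup F] [NormedSpace 𝕜 F]
  {f : E → F} {f' : E → E →L[𝕜] F}

theorem isLittleO_sub_pow_succ_of_hasFDerivAt {x₀ : E} {n : ℕ}
    (hf : ∀ᶠ x in nhds x₀, HasFDerivAt f (f' x) x)
    (hf' : f' =o[nhds x₀] fun x => ‖x - x₀‖ ^ n) :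
    (fun x => f x - f x₀) =o[nhds x₀] fun x => ‖x - x₀‖ ^ (n + 1) := by
  let : NormedSpace ℝ E := .restrictScalars ℝ 𝕜 E
  obtain ⟨ε, hε, hball⟩ := Metric.eventually_nhds_iff_ball.1 hf
  have hnhds : nhdsWithin x₀ (Metric.ball x₀ ε) = nhds x₀ :=
    nhdsWithin_eq_nhds.2 (Metric.ball_mem_nhds x₀ hε)
  rw [← hnhds] at hf' ⊢
  exact (convex_ball x₀ ε).isLittleO_pow_succ (Metric.mem_ball_self hε)
    (fun x hx => (hball x hx).hasFDerivWithinAt) hf'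

theorem isLittleO_taylor_two_of_hasFDerivAt {f'' : E →L[𝕜] E →L[𝕜] F} {x₀ : E}
    (hf : ∀ᶠ x in nhds x₀, HasFDerivAt f (f' x) x) (hf' : HasFDerivAt f' f'' x₀) :
    (fun x => f x - f x₀ - f' x₀ (x - x₀) - (1 / 2 : 𝕜) • f'' (x - x₀) (x - x₀))
      =o[nhds x₀] fun x => ‖x - x₀‖ ^ 2 := by
  have hsymm : ∀ v w, f'' v w = f'' w v := second_derivative_symmetric_of_eventually hf hf'
  have hderiv : ∀ᶠ x in nhds x₀,
      HasFDerivAt (fun y => f y - f' x₀ y - (1 / 2 : 𝕜) • f'' (y - x₀) (y - x₀))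
        (f' x - f' x₀ - f'' (x - x₀)) x := by
    filter_upwards [hf] with x hx
    exact (hx.sub (f' x₀).hasFDerivAt).sub (hasFDerivAt_half_smul_bilinear_self hsymm x₀ x)
  have hsmall : (fun x => f' x - f' x₀ - f'' (x - x₀)) =o[nhds x₀] fun x => ‖x - x₀‖ ^ 1 := by
    simpa only [pow_one] using hf'.isLittleO.norm_right
  refine (isLittleO_sub_pow_succ_of_hasFDerivAt hderiv hsmall).congr_left fun x => ?_
  simp only [sub_self, map_zero, smul_zero, map_sub]
  abel

theorem isLittleO_taylor_two_comp_of_hasFDerivAt {χ : D → E} {χ' : D →L[𝕜] E} {g₀ : D}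
    {f'' : E →L[𝕜] E →L[𝕜] F} (hf : ∀ᶠ x in nhds (χ g₀), HasFDerivAt f (f' x) x)
    (hf' : HasFDerivAt f' f'' (χ g₀)) (hχ : HasFDerivAt χ χ' g₀) :
    (fun z => f (χ z) - f (χ g₀) - f' (χ g₀) (χ z - χ g₀)
        - (1 / 2 : 𝕜) • f'' (χ' (z - g₀)) (χ' (z - g₀)))
      =o[nhds g₀] fun z => ‖z - g₀‖ ^ 2 := by
  have hχO : (fun z => χ z - χ g₀) =O[nhds g₀] fun z => z - g₀ := hχ.isBigO_sub
  have htaylor := ((isLittleO_taylor_two_of_hasFDerivAt hf hf').comp_tendsto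
    hχ.continuousAt).trans_isBigO (hχO.norm_norm.pow 2)
  have hquad : (fun z => f'' (χ z - χ g₀) (χ z - χ g₀) - f'' (χ' (z - g₀)) (χ' (z - g₀)))
      =o[nhds g₀] fun z => ‖z - g₀‖ ^ 2 := by
    simpa only [← sq] using isLittleO_bilinear_sub_bilinear f'' hχ.isLittleO hχ.isLittleO
      (χ'.isBigO_sub _ _) hχO
  refine (htaylor.add (hquad.const_smul_left (1 / 2 : 𝕜))).congr_left fun z => ?_
  simp only [Function.comp_apply, Pi.smul_apply, smul_sub, sub_add_sub_cancel]

theorem goq_vector_hr_equivalent_general {χ : D → E} {g₀ : D}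
    (hf : ∀ᶠ x in nhds (χ g₀), DifferentiableAt 𝕜 f x)
    (hf' : DifferentiableAt 𝕜 (fderiv 𝕜 f) (χ g₀)) (hχ : DifferentiableAt 𝕜 χ g₀)
    (hcrit : fderiv 𝕜 f (χ g₀) = 0) :
    (fun z => f (χ z) - f (χ g₀)
        - (1 / 2 : 𝕜) • iteratedFDeriv 𝕜 2 f (χ g₀)
            ![fderiv 𝕜 χ g₀ (z - g₀), fderiv 𝕜 χ g₀ (z - g₀)])
      =o[nhds g₀] fun z => ‖z - g₀‖ ^ 2 := by
  simpa [hcrit, iteratedFDeriv_two_apply] using isLittleO_taylor_two_comp_of_hasFDerivAt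
    (hf.mono fun _ hx => hx.hasFDerivAt) hf'.hasFDerivAt hχ.hasFDerivAt

end Taylor

/-- Pointwise content of the high-resolution equivalent of Proposition IV.1: with `F`
`C²` near the optimal decision `x₀ = χ(g₀)` where its derivative vanishes, and `χ`
differentiable at `g₀`, the optimality gap `F(χ(z)) - F(χ(g₀))` equals the quadratic
form `(1/2) H(J(z-g₀), J(z-g₀))` up to `o(‖z-g₀‖²)`. -/
theorem goq_vector_hr_equivalent
    (d p : ℕ) (F : EuclideanSpace ℝ (Fin d) → ℝ)
    (χ : EuclideanSpace ℝ (Fin p) → EuclideanSpace ℝ (Fin d))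
    (g₀ : EuclideanSpace ℝ (Fin p))
    (U : Set (EuclideanSpace ℝ (Fin d))) (hU : U ∈ nhds (χ g₀))
    (hF : ContDiffOn ℝ 2 F U)
    (hχ : DifferentiableAt ℝ χ g₀)
    (hgrad : fderiv ℝ F (χ g₀) = 0) :
    (fun z => F (χ z) - F (χ g₀)
        - (1 / 2) * iteratedFDeriv ℝ 2 F (χ g₀)
            ![fderiv ℝ χ g₀ (z - g₀), fderiv ℝ χ g₀ (z - g₀)])
      =o[nhds g₀] (fun z => ‖z - g₀‖ ^ 2) := by
  have hFx : ContDiffAt ℝ 2 F (χ g₀) := hF.contDiffAt hU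
  exact goq_vector_hr_equivalent_general
    ((hFx.eventually (by simp)).mono fun _ hx => hx.differentiableAt two_ne_zero)
    ((hFx.fderiv_right one_add_one_eq_two.le).differentiableAt one_ne_zero) hχ hgrad
end
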